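/- arXiv:math/0512472 — 4 statements merged into one kernel-verified Lean document; each statement's English description precedes it below -/
import Mathlib

section
/- Let c₁, c₂ ∈ ℚˣ, let B = ℍ[ℚ, c₁, c₂], let L be a number field, let B_L = ℍ[L, c₁, c₂], and let ι : B → B_L be the natural injective ℚ-algebra homomorphism induced by ℚ ⊆ L (which commutes with the standard involutions). Let O ⊆ B be a subring containing 1 and closed under star, and set Λ_O = {y ∈ O : y + star y = 0} ∩ (ℤ·1 + 2O). Let R be the 𝓞_L-submodule of B_L spanned by ι(O). Then {x ∈ R : x + star x = 0} ∩ (𝓞_L·1 + 2R) equals the 𝓞_L-submodule of B_L spanned by ι(Λ_O). -/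
open NumberField Quaternion

theorem aux_inj (c₁ c₂ : ℚ) (L : Type) [Field L] [NumberField L]
    (ι : ℍ[ℚ, c₁, c₂] →ₐ[ℚ] ℍ[L, algebraMap ℚ L c₁, algebraMap ℚ L c₂])
    (hι : ∀ x : ℍ[ℚ, c₁, c₂], ι x =
      ⟨algebraMap ℚ L x.re, algebraMap ℚ L x.imI, algebraMap ℚ L x.imJ,
        algebraMap ℚ L x.imK⟩)
    (u : Module.Free.ChooseBasisIndex ℤ (𝓞 L) → ℍ[ℚ, c₁, c₂])
    (h : ∑ i, RingOfIntegers.basis L i • ι (u i) = 0) (i) : u i = 0 := by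
  have key : ∀ g : Module.Free.ChooseBasisIndex ℤ (𝓞 L) → ℚ,
      ∑ i, algebraMap (𝓞 L) L (RingOfIntegers.basis L i) * algebraMap ℚ L (g i) = 0 →
      ∀ i, g i = 0 := by
    intro g hg
    apply Fintype.linearIndependent_iff.mp (integralBasis L).linearIndependent
    rw [← hg]
    refine Finset.sum_congr rfl fun j _ => ?_
    rw [integralBasis_apply, Algebra.smul_def, mul_comm]
  have comp : ∀ (f : ℍ[L, algebraMap ℚ L c₁, algebraMap ℚ L c₂] →ₗ[L] L)
      (g : ℍ[ℚ, c₁, c₂] → ℚ), (∀ x, f (ι x) = algebraMap ℚ L (g x)) → g (u i) = 0 := by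
    intro f g hfg
    refine key (fun j => g (u j)) ?_ i
    have h2 := congrArg f h
    rw [map_sum, map_zero] at h2
    rw [← h2]
    refine Finset.sum_congr rfl fun j _ => ?_
    rw [← hfg, ← smul_eq_mul, ← map_smul]
    rw [algebraMap_smul]
  have h1 := comp (QuaternionAlgebra.reₗ _ _ _) (fun x => x.re) (by intro x; rw [hι]; rfl)
  have h2 := comp (QuaternionAlgebra.imIₗ _ _ _) (fun x => x.imI) (by intro x; rw [hι]; rfl)
  have h3 := comp (QuaternionAlgebra.imJₗ _ _ _) (fun x => x.imJ) (by intro x; rw [hι]; rfl)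
  have h4 := comp (QuaternionAlgebra.imKₗ _ _ _) (fun x => x.imK) (by intro x; rw [hι]; rfl)
  exact QuaternionAlgebra.ext h1 h2 h3 h4

theorem aux_zsmul {A B F : Type*} [Ring A] [AddCommGroup B] [Module A B] [AddCommGroup F]
    (f : F →+ B) {κ : Type*} [Fintype κ] (b : Module.Basis κ ℤ A) (a : A) (x : F) :
    a • f x = ∑ j, b j • f (b.repr a j • x) := by
  conv_lhs => rw [← b.sum_repr a, Finset.sum_smul]
  refine Finset.sum_congr rfl fun j _ => ?_
  rw [map_zsmul, smul_assoc, smul_comm]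

theorem aux_span {A B F : Type*} [Ring A] [AddCommGroup B] [Module A B] [AddCommGroup F]
    (f : F →+ B) {κ : Type*} [Fintype κ] (b : Module.Basis κ ℤ A) (O : AddSubgroup F) (x : B)
    (hx : x ∈ Submodule.span A (f '' (O : Set F))) :
    ∃ o : κ → F, (∀ i, o i ∈ O) ∧ x = ∑ i, b i • f (o i) := by
  induction hx using Submodule.closure_induction with
  | zero => exact ⟨fun _ => 0, fun _ => O.zero_mem, by simp⟩
  | add x y _ _ hx hy =>
    obtain ⟨o, ho, rfl⟩ := hx
    obtain ⟨p, hp, rfl⟩ := hy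
    exact ⟨fun i => o i + p i, fun i => O.add_mem (ho i) (hp i), by
      simp [Finset.sum_add_distrib]⟩
  | smul_mem a x hx =>
    obtain ⟨y, hy, rfl⟩ := hx
    exact ⟨fun j => b.repr a j • y, fun j => O.zsmul_mem hy _, aux_zsmul f b a y⟩

theorem aux_spanO (c₁ c₂ : ℚ) (L : Type) [Field L] [NumberField L]
    (ι : ℍ[ℚ, c₁, c₂] →ₐ[ℚ] ℍ[L, algebraMap ℚ L c₁, algebraMap ℚ L c₂])
    (O : Subring ℍ[ℚ, c₁, c₂]) (x : ℍ[L, algebraMap ℚ L c₁, algebraMap ℚ L c₂])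
    (hx : x ∈ Submodule.span (𝓞 L) (ι '' (O : Set ℍ[ℚ, c₁, c₂]))) :
    ∃ o : Module.Free.ChooseBasisIndex ℤ (𝓞 L) → ℍ[ℚ, c₁, c₂], (∀ i, o i ∈ O) ∧
      x = ∑ i, RingOfIntegers.basis L i • ι (o i) := by
  have := aux_span (AddMonoidHomClass.toAddMonoidHom ι) (RingOfIntegers.basis L)
    O.toAddSubgroup x
  exact this hx

theorem aux_one (c₁ c₂ : ℚ) (L : Type) [Field L] [NumberField L]
    (ι : ℍ[ℚ, c₁, c₂] →ₐ[ℚ] ℍ[L, algebraMap ℚ L c₁, algebraMap ℚ L c₂]) (a : 𝓞 L) :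
    a • (1 : ℍ[L, algebraMap ℚ L c₁, algebraMap ℚ L c₂]) = ∑ i, RingOfIntegers.basis L i •
      ι ((RingOfIntegers.basis L).repr a i • (1 : ℍ[ℚ, c₁, c₂])) := by
  have := aux_zsmul (AddMonoidHomClass.toAddMonoidHom ι) (RingOfIntegers.basis L) a 1
  rw [← map_one ι]
  exact this

/-- Let `B = ℍ[ℚ, c₁, c₂]`, `L` a number field, `B_L = ℍ[L, c₁, c₂]` and
`ι : B → B_L` the natural map. Let `O ⊆ B` be a star-stable subring and
`Λ_O = O⁰ ∩ (ℤ·1 + 2O)` (trace-zero part). If `R` is the `𝓞 L`-span of `ι(O)`,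
then `{x ∈ R : x + star x = 0} ∩ (𝓞_L·1 + 2R)` is the `𝓞 L`-span of `ι(Λ_O)`. -/
theorem stmt7 (c₁ c₂ : ℚ) (hc₁ : c₁ ≠ 0) (hc₂ : c₂ ≠ 0)
    (L : Type) [Field L] [NumberField L]
    (ι : ℍ[ℚ, c₁, c₂] →ₐ[ℚ] ℍ[L, algebraMap ℚ L c₁, algebraMap ℚ L c₂])
    (hι : ∀ x : ℍ[ℚ, c₁, c₂], ι x =
      ⟨algebraMap ℚ L x.re, algebraMap ℚ L x.imI, algebraMap ℚ L x.imJ,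
        algebraMap ℚ L x.imK⟩)
    (O : Subring ℍ[ℚ, c₁, c₂]) (hO : ∀ x ∈ O, star x ∈ O)
    (Λ : Set ℍ[ℚ, c₁, c₂])
    (hΛ : Λ = {y : ℍ[ℚ, c₁, c₂] | y ∈ O ∧ y + star y = 0 ∧
      ∃ n : ℤ, ∃ z ∈ O, y = (n : ℍ[ℚ, c₁, c₂]) + 2 * z})
    (R : Submodule (𝓞 L) ℍ[L, algebraMap ℚ L c₁, algebraMap ℚ L c₂])
    (hR : R = Submodule.span (𝓞 L) (ι '' (O : Set ℍ[ℚ, c₁, c₂]))) :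
    {x : ℍ[L, algebraMap ℚ L c₁, algebraMap ℚ L c₂] | x ∈ R ∧ x + star x = 0 ∧
        ∃ a : 𝓞 L, ∃ y ∈ R,
          x = algebraMap (𝓞 L) ℍ[L, algebraMap ℚ L c₁, algebraMap ℚ L c₂] a + 2 * y}
      = (Submodule.span (𝓞 L) (ι '' Λ) : Set _) := by
  have hstar : ∀ x, star (ι x) = ι (star x) := by
    intro x
    rw [hι, hι]
    ext <;> simp
  have hstars : ∀ (a : 𝓞 L) (x : ℍ[L, algebraMap ℚ L c₁, algebraMap ℚ L c₂]),
      star (a • x) = a • star x := by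
    intro a x
    rw [← algebraMap_smul L a x, ← algebraMap_smul L a (star x)]
    exact QuaternionAlgebra.star_smul _ _
  have halg : ∀ a : 𝓞 L, algebraMap (𝓞 L) ℍ[L, algebraMap ℚ L c₁, algebraMap ℚ L c₂] a
      = a • (1 : ℍ[L, algebraMap ℚ L c₁, algebraMap ℚ L c₂]) :=
    fun a => Algebra.algebraMap_eq_smul_one a
  subst hR hΛ
  ext x
  simp only [Set.mem_ofPred_eq, SetLike.mem_coe]
  constructor
  · rintro ⟨hx, htr, a, y, hy, hxy⟩
    obtain ⟨o, ho, rfl⟩ := aux_spanO c₁ c₂ L ι O x hx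
    obtain ⟨p, hp, rfl⟩ := aux_spanO c₁ c₂ L ι O y hy
    have e1 := aux_inj c₁ c₂ L ι hι (fun i => o i + star (o i)) (by
      rw [← htr, star_sum, ← Finset.sum_add_distrib]
      refine Finset.sum_congr rfl fun j _ => ?_
      rw [hstars, hstar, map_add, smul_add])
    have e2 := aux_inj c₁ c₂ L ι hι
      (fun i => o i - ((RingOfIntegers.basis L).repr a i • 1 + 2 * p i)) (by
      have ha := aux_one c₁ c₂ L ι a
      rw [halg, ha] at hxy
      simp only [map_sub, map_add, smul_sub, smul_add, Finset.sum_sub_distrib,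
        Finset.sum_add_distrib]
      rw [hxy, Finset.mul_sum]
      simp only [two_mul, map_add, smul_add]
      abel)
    refine Submodule.sum_mem _ fun i _ => Submodule.smul_mem _ _ (Submodule.subset_span ?_)
    refine ⟨o i, ⟨ho i, e1 i, (RingOfIntegers.basis L).repr a i, p i, hp i, ?_⟩, rfl⟩
    have := sub_eq_zero.mp (e2 i)
    rw [this, zsmul_one]
  · intro hx
    induction hx using Submodule.span_induction with
    | mem x h =>
      obtain ⟨y, ⟨hy, ht, n, z, hz, hyz⟩, rfl⟩ := h
      refine ⟨Submodule.subset_span ⟨y, hy, rfl⟩, ?_, n, ι z,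
        Submodule.subset_span ⟨z, hz, rfl⟩, ?_⟩
      · rw [hstar, ← map_add, ht, map_zero]
      · rw [hyz]; simp [two_mul]
    | zero => exact ⟨Submodule.zero_mem _, by simp, 0, 0, Submodule.zero_mem _, by simp⟩
    | add x y _ _ hx hy =>
      obtain ⟨hx1, hx2, a, u, hu, hxu⟩ := hx
      obtain ⟨hy1, hy2, b, v, hv, hyv⟩ := hy
      refine ⟨Submodule.add_mem _ hx1 hy1, ?_, a + b, u + v, Submodule.add_mem _ hu hv, ?_⟩
      · rw [star_add, add_add_add_comm, hx2, hy2, add_zero]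
      · rw [hxu, hyv, map_add, mul_add, add_add_add_comm]
    | smul c x _ hx =>
      obtain ⟨hx1, hx2, a, u, hu, hxu⟩ := hx
      refine ⟨Submodule.smul_mem _ c hx1, ?_, c * a, c • u, Submodule.smul_mem _ c hu, ?_⟩
      · rw [hstars, ← smul_add, hx2, smul_zero]
      · conv_lhs => rw [hxu]
        rw [smul_add, two_mul, two_mul, smul_add, halg, halg, mul_smul]
end

section
/- Let c₁, c₂ ∈ ℚˣ, let B = ℍ[ℚ, c₁, c₂], let q be a prime number, let B_q = ℍ[ℚ_q, c₁, c₂] be the quaternion algebra over the field of q-adic numbers, and let ι : B → B_q be the natural ℚ-algebra homomorphism induced by ℚ ⊆ ℚ_q (which commutes with the standard involutions). Let O ⊆ B be a subring containing 1 and closed under star, and set Λ_O = {y ∈ O : y + star y = 0} ∩ (ℤ·1 + 2O). Let R_q be the ℤ_q-submodule of B_q spanned by ι(O). Then the ℤ_q-submodule of B_q spanned by ι(Λ_O) equals {x ∈ R_q : x + star x = 0} ∩ (ℤ_q·1 + 2R_q). -/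
open NumberField Quaternion

/-- Every subring `S` of `ℚ` satisfies `S = ℤ + 2S`. -/
lemma rat_subring_aux (S : Subring ℚ) (t : ℚ) (ht : t ∈ S) :
    ∃ n : ℤ, ∃ s ∈ S, t = n + 2 * s := by
  have hd : (t.den : ℚ) ≠ 0 := by exact_mod_cast t.den_ne_zero
  have htd : t * t.den = t.num := Rat.mul_den_eq_num t
  have hcop : IsCoprime t.num (t.den : ℤ) := by
    rw [Int.isCoprime_iff_gcd_eq_one]
    exact t.reduced
  obtain ⟨x, y, hxy⟩ := hcop
  have hxy' : (x : ℚ) * t.num + y * t.den = 1 := by exact_mod_cast hxy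
  have hinv : (1 / (t.den : ℚ)) ∈ S := by
    have : (1 / (t.den : ℚ)) = x * t + y := by
      field_simp
      rw [← hxy', ← htd]; ring
    rw [this]
    exact S.add_mem (S.mul_mem (intCast_mem S x) ht) (intCast_mem S y)
  rcases Nat.even_or_odd' t.den with ⟨w, hw | hw⟩
  · refine ⟨0, t * (w * (1 / (t.den : ℚ))), S.mul_mem ht (S.mul_mem (natCast_mem S w) hinv), ?_⟩
    have hw' : (t.den : ℚ) = 2 * w := by exact_mod_cast hw
    have : 2 * ((w : ℚ) * (1 / (t.den : ℚ))) = 1 := by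
      rw [← mul_assoc, ← hw']; field_simp
    push_cast
    linear_combination (-t) * this
  · refine ⟨t.num, -(w * t.num * (1 / (t.den : ℚ))), S.neg_mem
      (S.mul_mem (S.mul_mem (natCast_mem S w) (intCast_mem S _)) hinv), ?_⟩
    have hw' : (t.den : ℚ) = 2 * w + 1 := by exact_mod_cast hw
    have h1 : (t.num : ℚ) * (1 / (t.den : ℚ)) = t := by
      rw [← htd]; field_simp
    linear_combination htd - t * hw' - 2 * (w : ℚ) * h1 * (-1)

/-- Let `B = ℍ[ℚ, c₁, c₂]`, `q` a prime, `B_q = ℍ[ℚ_q, c₁, c₂]` and `ι : B → B_q`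
the natural map. Let `O ⊆ B` be a star-stable subring and `Λ_O = O⁰ ∩ (ℤ·1 + 2O)`.
If `R_q` is the `ℤ_q`-span of `ι(O)`, then the `ℤ_q`-span of `ι(Λ_O)` equals
`{x ∈ R_q : x + star x = 0} ∩ (ℤ_q·1 + 2R_q)`. -/
theorem stmt8 (c₁ c₂ : ℚ) (hc₁ : c₁ ≠ 0) (hc₂ : c₂ ≠ 0)
    (q : ℕ) [Fact q.Prime]
    (ι : ℍ[ℚ, c₁, c₂] →ₐ[ℚ]
      ℍ[ℚ_[q], algebraMap ℚ ℚ_[q] c₁, algebraMap ℚ ℚ_[q] c₂])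
    (hι : ∀ x : ℍ[ℚ, c₁, c₂], ι x =
      ⟨algebraMap ℚ ℚ_[q] x.re, algebraMap ℚ ℚ_[q] x.imI, algebraMap ℚ ℚ_[q] x.imJ,
        algebraMap ℚ ℚ_[q] x.imK⟩)
    (O : Subring ℍ[ℚ, c₁, c₂]) (hO : ∀ x ∈ O, star x ∈ O)
    (Λ : Set ℍ[ℚ, c₁, c₂])
    (hΛ : Λ = {y : ℍ[ℚ, c₁, c₂] | y ∈ O ∧ y + star y = 0 ∧
      ∃ n : ℤ, ∃ z ∈ O, y = (n : ℍ[ℚ, c₁, c₂]) + 2 * z})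
    (Rq : Submodule ℤ_[q] ℍ[ℚ_[q], algebraMap ℚ ℚ_[q] c₁, algebraMap ℚ ℚ_[q] c₂])
    (hRq : Rq = Submodule.span ℤ_[q] (ι '' (O : Set ℍ[ℚ, c₁, c₂]))) :
    (Submodule.span ℤ_[q] (ι '' Λ) : Set _)
      = {x : ℍ[ℚ_[q], algebraMap ℚ ℚ_[q] c₁, algebraMap ℚ ℚ_[q] c₂] |
          x ∈ Rq ∧ x + star x = 0 ∧
          ∃ a : ℤ_[q], ∃ y ∈ Rq,
            x = algebraMap ℤ_[q] ℍ[ℚ_[q], algebraMap ℚ ℚ_[q] c₁, algebraMap ℚ ℚ_[q] c₂] a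
              + 2 * y} := by
  have hstar : ∀ x, ι (star x) = star (ι x) := by
    intro x
    rw [hι, hι]
    ext <;> simp
  have hss : ∀ (a : ℤ_[q]) (x : ℍ[ℚ_[q], algebraMap ℚ ℚ_[q] c₁, algebraMap ℚ ℚ_[q] c₂]),
      star (a • x) = a • star x := by
    intro a x
    ext <;> simp
  have hsa : ∀ a : ℤ_[q],
      star (algebraMap ℤ_[q] ℍ[ℚ_[q], algebraMap ℚ ℚ_[q] c₁, algebraMap ℚ ℚ_[q] c₂] a)
        = algebraMap ℤ_[q] ℍ[ℚ_[q], algebraMap ℚ ℚ_[q] c₁, algebraMap ℚ ℚ_[q] c₂] a := by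
    intro a
    rw [Algebra.algebraMap_eq_smul_one (A := ℍ[ℚ_[q], algebraMap ℚ ℚ_[q] c₁, algebraMap ℚ ℚ_[q] c₂]) a,
      hss, star_one]
  -- for `o ∈ O`, the element `o - star o` is in `Λ`
  have key : ∀ o ∈ O, o - star o ∈ Λ := by
    intro o ho
    rw [hΛ]
    refine ⟨O.sub_mem ho (hO o ho), by rw [star_sub, star_star]; abel, ?_⟩
    have htr : algebraMap ℚ ℍ[ℚ, c₁, c₂] (2 * o.re) = o + star o := by
      ext <;> simp [QuaternionAlgebra.algebraMap_eq] <;> ring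
    obtain ⟨n, s, hs, hns⟩ := rat_subring_aux (O.comap (algebraMap ℚ ℍ[ℚ, c₁, c₂])) (2 * o.re)
      (by rw [Subring.mem_comap, htr]; exact O.add_mem ho (hO o ho))
    rw [Subring.mem_comap] at hs
    refine ⟨-n, o - algebraMap ℚ ℍ[ℚ, c₁, c₂] s, O.sub_mem ho hs, ?_⟩
    rw [hns, map_add, map_mul, map_intCast, map_ofNat] at htr
    have : star o = n + 2 * algebraMap ℚ ℍ[ℚ, c₁, c₂] s - o := by rw [htr]; abel
    rw [this, mul_sub, two_mul o]
    push_cast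
    abel
  have key2 : ∀ y ∈ Rq, y - star y ∈ Submodule.span ℤ_[q] (ι '' Λ) := by
    intro y hy
    rw [hRq] at hy
    induction hy using Submodule.span_induction with
    | mem x hx =>
      obtain ⟨o, ho, rfl⟩ := hx
      rw [← hstar, ← map_sub]
      exact Submodule.subset_span ⟨_, key o ho, rfl⟩
    | zero => simp
    | add x y _ _ hx hy =>
      rw [star_add, add_sub_add_comm]
      exact Submodule.add_mem _ hx hy
    | smul a x _ hx =>
      rw [hss, ← smul_sub]
      exact Submodule.smul_mem _ a hx
  ext x
  simp only [SetLike.mem_coe, Set.mem_ofPred_eq]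
  constructor
  · intro hx
    induction hx using Submodule.span_induction with
    | mem x hx =>
      obtain ⟨o, ho, rfl⟩ := hx
      rw [hΛ] at ho
      obtain ⟨h1, h2, n, z, hz, h3⟩ := ho
      refine ⟨?_, ?_, n, ι z, ?_, ?_⟩
      · rw [hRq]; exact Submodule.subset_span ⟨_, h1, rfl⟩
      · rw [← hstar, ← map_add, h2, map_zero]
      · rw [hRq]; exact Submodule.subset_span ⟨_, hz, rfl⟩
      · rw [h3, map_add, map_mul, map_intCast, map_intCast, map_ofNat]
    | zero => exact ⟨zero_mem _, by simp, 0, 0, zero_mem _, by simp⟩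
    | add x y _ _ hx hy =>
      obtain ⟨h1, h2, a, u, hu, h3⟩ := hx
      obtain ⟨k1, k2, b, v, hv, k3⟩ := hy
      refine ⟨add_mem h1 k1, ?_, a + b, u + v, add_mem hu hv, ?_⟩
      · rw [star_add, add_add_add_comm, h2, k2, add_zero]
      · rw [h3, k3, map_add, mul_add]; abel
    | smul r x _ hx =>
      obtain ⟨h1, h2, a, u, hu, h3⟩ := hx
      refine ⟨Submodule.smul_mem _ _ h1, ?_, r * a, r • u, Submodule.smul_mem _ _ hu, ?_⟩
      · rw [hss, ← smul_add, h2, smul_zero]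
      · rw [h3, smul_add, two_mul, two_mul, smul_add, map_mul, Algebra.smul_def r (algebraMap _ _ a)]
  · rintro ⟨_, h2, a, y, hy, h3⟩
    have h4 : x = y - star y := by
      have h5 : (2 : ℚ_[q]) • x = (2 : ℚ_[q]) • (y - star y) := by
        have h6 : star x = algebraMap ℤ_[q] _ a + 2 * star y := by
          rw [h3, star_add, hsa, two_mul, two_mul, star_add]
        have h7 : star x = -x := by rw [eq_neg_iff_add_eq_zero, add_comm]; exact h2
        have h8 : x + x = x - star x := by rw [h7]; abel
        rw [two_smul, two_smul, h8, h6, h3, two_mul, two_mul]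
        abel
      exact smul_right_injective _ (two_ne_zero) h5
    rw [h4]
    exact key2 y hy
end

section
/- Let c₁, c₂ ∈ ℚˣ and B = ℍ[ℚ, c₁, c₂], and assume B has no zero divisors. Let O ⊆ B be a subring closed under star with O ∩ ℚ·1 = ℤ·1. Let D > 1 be a squarefree integer. Then there exists a matrix C ∈ M₂(B) with all entries in O satisfying Cᴴ = C and C² = D·I₂ if and only if there exist s ∈ ℤ and r ∈ O with s²·1 + r·star r = D·1 in B. -/
open Quaternion Matrix

/-- Let `B = ℍ[ℚ, c₁, c₂]` have no zero divisors, `O ⊆ B` a star-stable subring with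
`O ∩ ℚ·1 = ℤ·1`, and `D > 1` squarefree. Then there is a matrix `C ∈ M₂(O)` with
`Cᴴ = C` and `C² = D·I₂` if and only if there are `s ∈ ℤ` and `r ∈ O` with
`s²·1 + r·star r = D·1`. -/
theorem stmt14 (c₁ c₂ : ℚ) (hc₁ : c₁ ≠ 0) (hc₂ : c₂ ≠ 0)
    (hB : ∀ x y : ℍ[ℚ, c₁, c₂], x * y = 0 → x = 0 ∨ y = 0)
    (O : Subring ℍ[ℚ, c₁, c₂]) (hO : ∀ x ∈ O, star x ∈ O)
    (hOQ : ∀ x : ℍ[ℚ, c₁, c₂],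
      (x ∈ O ∧ ∃ q : ℚ, x = algebraMap ℚ ℍ[ℚ, c₁, c₂] q) ↔
        ∃ n : ℤ, x = (n : ℍ[ℚ, c₁, c₂]))
    (D : ℤ) (hD : 1 < D) (hsf : Squarefree D) :
    (∃ C : Matrix (Fin 2) (Fin 2) ℍ[ℚ, c₁, c₂], (∀ i j, C i j ∈ O) ∧ Cᴴ = C ∧
        C ^ 2 = (D : ℍ[ℚ, c₁, c₂]) • (1 : Matrix (Fin 2) (Fin 2) ℍ[ℚ, c₁, c₂]))
      ↔ ∃ s : ℤ, ∃ r ∈ O,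
          ((s : ℍ[ℚ, c₁, c₂])) ^ 2 + r * star r = (D : ℍ[ℚ, c₁, c₂]) := by
  constructor
  · rintro ⟨C, hC, hH, hsq⟩
    have h00 : star (C 0 0) = C 0 0 := by
      have := congrFun (congrFun hH 0) 0
      simpa [Matrix.conjTranspose_apply] using this
    have h10 : star (C 0 1) = C 1 0 := by
      have := congrFun (congrFun hH 1) 0
      simpa [Matrix.conjTranspose_apply] using this
    obtain ⟨s, hs⟩ := (hOQ (C 0 0)).1
      ⟨hC 0 0, (C 0 0).re, QuaternionAlgebra.star_eq_self.1 h00⟩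
    refine ⟨s, C 0 1, hC 0 1, ?_⟩
    have h := congrFun (congrFun hsq 0) 0
    rw [pow_two, Matrix.mul_apply, Fin.sum_univ_two, ← h10, hs] at h
    rw [pow_two, h]
    simp
  · rintro ⟨s, r, hr, h⟩
    have hcomm : star r * r = r * star r := star_comm_self' r
    have hsr : (s : ℍ[ℚ, c₁, c₂]) * r = r * s := Int.cast_comm s r
    have hsr' : (s : ℍ[ℚ, c₁, c₂]) * star r = star r * s := Int.cast_comm s (star r)
    have hS : (s : ℍ[ℚ, c₁, c₂]) ∈ O := intCast_mem O s
    have hss : star (s : ℍ[ℚ, c₁, c₂]) = s := star_intCast s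
    refine ⟨!![(s : ℍ[ℚ, c₁, c₂]), r; star r, -(s : ℍ[ℚ, c₁, c₂])], ?_, ?_, ?_⟩
    · intro i j
      fin_cases i <;> fin_cases j
      · exact hS
      · exact hr
      · exact hO r hr
      · exact O.neg_mem hS
    · ext1 i j
      fin_cases i <;> fin_cases j <;> simp [Matrix.conjTranspose_apply, hss]
    · rw [pow_two] at h
      rw [pow_two]
      ext1 i j
      fin_cases i <;> fin_cases j
      · simp [Matrix.mul_apply, h]
      · simp [Matrix.mul_apply, hsr]
      · simp [Matrix.mul_apply, hsr']
      · simp [Matrix.mul_apply, hcomm, ← h, add_comm]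
end

section
/- Let c₁, c₂ ∈ ℚˣ and B = ℍ[ℚ, c₁, c₂]. For N ∈ M₂(B) with entries (n₁₁, n₁₂; n₂₁, n₂₂) set τ(N) = re(n₁₁) + re(n₂₂). Then τ is invariant under conjugation: for every invertible H ∈ M₂(B) and every N ∈ M₂(B), τ(H^{-1}·N·H) = τ(N). -/
open Quaternion Matrix

/-- `τ(X Y) = τ(Y X)` on `M₂(B)`. -/
theorem tau_mul_comm (c₁ c₂ : ℚ) (X Y : Matrix (Fin 2) (Fin 2) ℍ[ℚ, c₁, c₂]) :
    ((X * Y) 0 0).re + ((X * Y) 1 1).re = ((Y * X) 0 0).re + ((Y * X) 1 1).re := by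
  simp only [Matrix.mul_apply, Fin.sum_univ_two, QuaternionAlgebra.re_add,
    QuaternionAlgebra.re_mul]
  ring

/-- For `B = ℍ[ℚ, c₁, c₂]`, the function `τ(N) = re(n₁₁) + re(n₂₂)` on `M₂(B)` is
invariant under conjugation: `τ(H⁻¹ N H) = τ(N)` for every invertible `H`. -/
theorem stmt16 (c₁ c₂ : ℚ) (hc₁ : c₁ ≠ 0) (hc₂ : c₂ ≠ 0)
    (H N : Matrix (Fin 2) (Fin 2) ℍ[ℚ, c₁, c₂]) [Invertible H] :
    ((⅟H * N * H) 0 0).re + ((⅟H * N * H) 1 1).re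
      = (N 0 0).re + (N 1 1).re := by
  rw [mul_assoc, tau_mul_comm, mul_assoc, mul_invOf_self, mul_one]
end
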